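/- arXiv:2209.03843 — 3 statements merged into one kernel-verified Lean document; each statement's English description precedes it below -/
import Mathlib

section
/- Let f be a smooth cubic form in four variables over 𝔽₂ (i.e., a homogeneous polynomial of degree 3 in x, y, z, t with coefficients in 𝔽₂ such that, over an algebraic closure K of 𝔽₂, the only common zero in K⁴ of f together with its four partial derivatives is the origin). Then the stabilizer subgroup {g ∈ GL₄(𝔽₂) : f ∘ g = f} of f under the linear-substitution action of GL₄(𝔽₂) has order at most 720. -/
open MvPolynomial

noncomputable section

/-- The field with two elements. -/
abbrev F2 : Type := ZMod 2

/-- An algebraic closure of `F2`. -/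
abbrev Kbar : Type := AlgebraicClosure F2

/-- Linear substitution action of a matrix `g` on a polynomial `f`:
`(act g f)(x) = f (g * x)`, i.e. the variable `X i` is replaced by `∑ j, g i j • X j`. -/
def act (g : Matrix (Fin 4) (Fin 4) F2) (f : MvPolynomial (Fin 4) F2) :
    MvPolynomial (Fin 4) F2 :=
  aeval (fun i => ∑ j, g i j • X j) f

lemma act_one (f : MvPolynomial (Fin 4) F2) : act 1 f = f := by
  have h : (fun i => ∑ j, (1 : Matrix (Fin 4) (Fin 4) F2) i j • (X j : MvPolynomial (Fin 4) F2))
      = X := by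
    funext i
    simp [Matrix.one_apply, ite_smul]
  simp [act, h]

lemma act_act (g h : Matrix (Fin 4) (Fin 4) F2) (f : MvPolynomial (Fin 4) F2) :
    act g (act h f) = act (h * g) f := by
  show (aeval _) ((aeval _) f) = _
  rw [← AlgHom.comp_apply, comp_aeval]
  have key : (fun i => (aeval fun i => ∑ j, g i j • (X j : MvPolynomial (Fin 4) F2))
        (∑ j, h i j • (X j : MvPolynomial (Fin 4) F2)))
      = fun i => ∑ j, (h * g) i j • (X j : MvPolynomial (Fin 4) F2) := by
    funext i
    simp only [map_sum, map_smul, aeval_X, Matrix.mul_apply, Finset.smul_sum, smul_smul,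
      Finset.sum_smul]
    rw [Finset.sum_comm]
  rw [key]
  rfl

/-- The stabilizer of a polynomial `f` under the linear-substitution action of `GL₄(𝔽₂)`. -/
def stab (f : MvPolynomial (Fin 4) F2) : Subgroup (GL (Fin 4) F2) where
  carrier := {g | act (g : Matrix (Fin 4) (Fin 4) F2) f = f}
  one_mem' := by simpa using act_one f
  mul_mem' := by
    intro a b ha hb
    simp only [Set.mem_setOf_eq] at *
    have : act ((↑(a * b) : Matrix (Fin 4) (Fin 4) F2)) f = act ↑b (act ↑a f) := by
      rw [act_act]; rfl
    rw [this, ha, hb]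
  inv_mem' := by
    intro a ha
    simp only [Set.mem_setOf_eq] at *
    have h2 := congrArg (act ((↑(a⁻¹) : Matrix (Fin 4) (Fin 4) F2))) ha
    rw [act_act] at h2
    rw [Units.mul_inv, act_one] at h2
    exact h2.symm

/-- A smooth cubic form over `𝔽₂`: homogeneous of degree `3`, such that over an algebraic
closure the only common zero of `f` and its four partial derivatives is the origin. -/
def IsSmoothCubic (f : MvPolynomial (Fin 4) F2) : Prop :=
  f.IsHomogeneous 3 ∧
    ∀ v : Fin 4 → Kbar,
      eval v (map (algebraMap F2 Kbar) f) = 0 →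
      (∀ i : Fin 4, eval v (map (algebraMap F2 Kbar) (pderiv i f)) = 0) →
      v = 0

/-- The cubic form `x²t + y²z + yz² + xt²`. -/
def c0 : MvPolynomial (Fin 4) F2 :=
  X 0 ^ 2 * X 3 + X 1 ^ 2 * X 2 + X 1 * X 2 ^ 2 + X 0 * X 3 ^ 2

/-!
Since `|GL₄(𝔽₂)| = 20160 = 28 · 720`, it suffices that `7` and `4` divide the index of the
stabilizer of `f`. Euler's identity gives `f(v) = 3 f(v) = ∇f(v) · v` in characteristic two, so
smoothness says that `∇f` has no nontrivial zero.

*The prime 7.* If `g` of order seven preserves `f`, it has an eigenvector `v` over the algebraic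
closure whose eigenvalue `z` is a primitive seventh root of unity. As `∇f` is quadratic and
invariant, `∇f(v)` is a left eigenvector of eigenvalue `z⁻² = z⁵`. But the spectrum of `g` is stable
under squaring, so together with `z` and `z⁵` it would contain all six primitive seventh roots.

*The factor 4.* Two distinct transvections with a common centre `a` cannot both preserve `f`: the
Taylor expansions of `f (v + w(v) a)` for the two of them force `∇f(a) = 0`. So the group of order
eight of all transvections with a given centre acts on the cosets of the stabilizer with point
stabilizers of order at most two, hence with orbits of length divisible by four.
-/

open scoped Matrix Pointwise

section Gradient

variable {σ τ R A B : Type*} [CommSemiring R] [CommSemiring A] [Algebra R A]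

/-- The gradient of the polynomial `p` at a point `v` with coordinates in an algebra `A` over the
coefficient ring; taking `A` to be the polynomial ring itself allows for the generic point. -/
def gradientAt (p : MvPolynomial σ R) (v : σ → A) : σ → A :=
  fun i => aeval v (pderiv i p)

lemma gradientAt_algebraMap [CommSemiring B] [Algebra R B] [Algebra A B] [IsScalarTower R A B]
    (p : MvPolynomial σ R) (v : σ → A) :
    gradientAt p (algebraMap A B ∘ v) = algebraMap A B ∘ gradientAt p v := by
  funext i
  exact aeval_algebraMap_apply B v (pderiv i p)

lemma gradientAt_add (p q : MvPolynomial σ R) (v : σ → A) :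
    gradientAt (p + q) v = gradientAt p v + gradientAt q v := by
  funext i
  simp [gradientAt]

lemma gradientAt_smul (c : R) (p : MvPolynomial σ R) (v : σ → A) :
    gradientAt (c • p) v = c • gradientAt p v := by
  funext i
  simp [gradientAt]

lemma gradientAt_mul (p q : MvPolynomial σ R) (v : σ → A) :
    gradientAt (p * q) v = aeval v p • gradientAt q v + aeval v q • gradientAt p v := by
  funext i
  simp [gradientAt, Derivation.leibniz]

lemma gradientAt_X [DecidableEq σ] (i : σ) (v : σ → A) :
    gradientAt (X i : MvPolynomial σ R) v = Pi.single i 1 := by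
  funext j
  rw [gradientAt, pderiv_X]
  by_cases h : j = i <;> simp [h]

lemma gradientAt_aeval [Fintype τ] (p : MvPolynomial τ R) (q : τ → MvPolynomial σ R) (v : σ → A) :
    gradientAt (aeval q p) v =
      gradientAt p (fun j => aeval v (q j)) ᵥ* Matrix.of fun j => gradientAt (q j) v := by
  classical
  have aeval_comp (p : MvPolynomial τ R) :
      aeval v (aeval q p) = aeval (fun j => aeval v (q j)) p := by
    rw [← AlgHom.comp_apply, comp_aeval]
  induction p using MvPolynomial.induction_on with
  | C c =>
    funext i
    simp [gradientAt, Matrix.vecMul, dotProduct, algebraMap_eq]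
  | add p₁ p₂ h₁ h₂ => rw [map_add, gradientAt_add, gradientAt_add, h₁, h₂, Matrix.add_vecMul]
  | mul_X p j h =>
    rw [map_mul, aeval_X, gradientAt_mul, gradientAt_mul, gradientAt_X, h, aeval_comp, aeval_X,
      Matrix.add_vecMul, Matrix.smul_vecMul, Matrix.smul_vecMul, Matrix.single_one_vecMul]
    rfl

lemma aeval_smul_of_isHomogeneous {n : ℕ} {p : MvPolynomial σ R} (hp : p.IsHomogeneous n) (c : A)
    (v : σ → A) : aeval (c • v) p = c ^ n * aeval v p := by
  simp only [aeval_def, eval₂_eq, Finset.mul_sum]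
  refine Finset.sum_congr rfl fun d hd => ?_
  have degree_eq : ∑ i ∈ d.support, d i = n := by
    simpa [Finsupp.weight_apply, Finsupp.sum] using hp (mem_support_iff.1 hd)
  simp only [Pi.smul_apply, smul_eq_mul, mul_pow, Finset.prod_mul_distrib,
    Finset.prod_pow_eq_pow_sum, degree_eq]
  ring

lemma gradientAt_smul_of_isHomogeneous {n : ℕ} {p : MvPolynomial σ R} (hp : p.IsHomogeneous n)
    (c : A) (v : σ → A) : gradientAt p (c • v) = c ^ (n - 1) • gradientAt p v := by
  funext i
  exact aeval_smul_of_isHomogeneous hp.pderiv c v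

lemma gradientAt_dotProduct_self [Fintype σ] {n : ℕ} {p : MvPolynomial σ R}
    (hp : p.IsHomogeneous n) (v : σ → A) : gradientAt p v ⬝ᵥ v = n • aeval v p := by
  rw [← map_nsmul, ← hp.sum_X_mul_pderiv, map_sum]
  simp [gradientAt, dotProduct, mul_comm]

lemma aeval_add_smul_of_isHomogeneous_three [Fintype σ] {p : MvPolynomial σ R}
    (hp : p.IsHomogeneous 3) (v a : σ → A) (s : A) :
    aeval (v + s • a) p = aeval v p + s * (gradientAt p v ⬝ᵥ a)
      + s ^ 2 * (gradientAt p a ⬝ᵥ v) + s ^ 3 * aeval a p := by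
  classical
  have hspan : p ∈ Submodule.span R (Set.range (X : σ → MvPolynomial σ R)) ^ 3 := by
    rw [← homogeneousSubmodule_one_eq_span_X, homogeneousSubmodule_one_pow]
    exact hp
  clear hp
  rw [Submodule.span_pow] at hspan
  induction hspan using Submodule.span_induction with
  | mem x hx =>
    rw [pow_succ, pow_two] at hx
    obtain ⟨_, ⟨_, ⟨i, rfl⟩, _, ⟨j, rfl⟩, rfl⟩, _, ⟨k, rfl⟩, rfl⟩ := hx
    simp only [gradientAt_mul, gradientAt_X, map_mul, aeval_X, Pi.add_apply, Pi.smul_apply,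
      smul_eq_mul, add_dotProduct, smul_dotProduct, smul_add, single_dotProduct, one_mul]
    ring
  | zero => simp [gradientAt, dotProduct]
  | add x y _ _ hx hy =>
    simp only [map_add, gradientAt_add, add_dotProduct, hx, hy]
    ring
  | smul c x _ hx =>
    simp only [map_smul, gradientAt_smul, smul_dotProduct, hx]
    simp only [Algebra.smul_def]
    ring

end Gradient

section Transvections

variable {σ R : Type*} [Fintype σ] [CommRing R]

/-- The linear form with coefficient vector `w`, as a polynomial. -/
def linearForm : (σ → R) →ₗ[R] MvPolynomial σ R :=
  Fintype.linearCombination R X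

lemma linearForm_injective : Function.Injective (linearForm : (σ → R) →ₗ[R] MvPolynomial σ R) :=
  (linearIndependent_X σ R).fintypeLinearCombination_injective

lemma dotProduct_X_eq_linearForm (w : σ → R) : (C ∘ w) ⬝ᵥ X = linearForm w := by
  simp [linearForm, Fintype.linearCombination_apply, dotProduct, smul_eq_C_mul]

/-- The transvections `v ↦ v + (w ⬝ᵥ v) • a` with centre `a`, parametrized by the additive group of
the vectors `w` orthogonal to `a`. -/
def transvectionHom [DecidableEq σ] (a : σ → R) :
    Multiplicative (LinearMap.ker (dotProductEquiv R σ a)) →* GL σ R :=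
  MonoidHom.toHomUnits
    { toFun := fun w => 1 + Matrix.vecMulVec a (w.toAdd : σ → R)
      map_one' := by simp
      map_mul' := fun w₁ w₂ => by
        have horth : (w₁.toAdd : σ → R) ⬝ᵥ a = 0 := by
          rw [dotProduct_comm]
          exact w₁.toAdd.2
        simp [mul_add, add_mul, Matrix.vecMulVec_mul_vecMulVec, horth, Matrix.vecMulVec_add,
          add_assoc] }

lemma conj_transvectionHom [DecidableEq σ] (a : σ → R) (g : GL σ R)
    (w : Multiplicative (LinearMap.ker (dotProductEquiv R σ a))) :
    ((g * transvectionHom a w * g⁻¹ : GL σ R) : Matrix σ σ R) =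
      1 + Matrix.vecMulVec (g.1 *ᵥ a) ((w.toAdd : σ → R) ᵥ* g⁻¹.1) := by
  change g.1 * (1 + Matrix.vecMulVec a (w.toAdd : σ → R)) * g⁻¹.1 = _
  rw [mul_add, add_mul, mul_one, Units.mul_inv, Matrix.mul_vecMulVec, Matrix.vecMulVec_mul]

variable [IsDomain R] {p : MvPolynomial σ R} {a w w₁ w₂ : σ → R}

lemma gradientAt_X_dotProduct_of_transvection (hp : p.IsHomogeneous 3) (hw : w ≠ 0)
    (hinv : aeval (X + linearForm w • (C ∘ a)) p = p) :
    gradientAt p X ⬝ᵥ (C ∘ a) + linearForm w * linearForm (gradientAt p a)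
      + linearForm w ^ 2 * C (aeval a p) = 0 := by
  have hgrad : gradientAt p (C ∘ a) ⬝ᵥ X = linearForm (gradientAt p a) := by
    rw [← dotProduct_X_eq_linearForm, ← algebraMap_eq, gradientAt_algebraMap]
  have hval : aeval (C ∘ a) p = C (aeval a p) :=
    aeval_algebraMap_apply (MvPolynomial σ R) a p
  have hne : linearForm w ≠ 0 := (map_ne_zero_iff _ linearForm_injective).2 hw
  rw [aeval_add_smul_of_isHomogeneous_three hp, hgrad, hval, aeval_X_left_apply] at hinv
  refine (mul_eq_zero.1 ?_).resolve_left hne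
  linear_combination hinv

lemma gradientAt_eq_of_transvections (hp : p.IsHomogeneous 3) (h₁ : w₁ ≠ 0) (h₂ : w₂ ≠ 0)
    (h₁₂ : w₁ ≠ w₂) (hinv₁ : aeval (X + linearForm w₁ • (C ∘ a)) p = p)
    (hinv₂ : aeval (X + linearForm w₂ • (C ∘ a)) p = p) :
    gradientAt p a = -aeval a p • (w₁ + w₂) := by
  have e₁ := gradientAt_X_dotProduct_of_transvection hp h₁ hinv₁
  have e₂ := gradientAt_X_dotProduct_of_transvection hp h₂ hinv₂
  have hne : linearForm (w₁ - w₂) ≠ 0 :=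
    (map_ne_zero_iff _ linearForm_injective).2 (sub_ne_zero.2 h₁₂)
  apply linearForm_injective
  refine mul_left_cancel₀ hne ?_
  simp only [map_sub, map_smul, map_add, smul_eq_C_mul, map_neg]
  linear_combination e₁ - e₂

end Transvections

section DotProductKernel

variable {n k : Type*} [Fintype n] [DecidableEq n] [Field k]

lemma card_ker_dotProductEquiv {a : n → k} (ha : a ≠ 0) :
    Nat.card (LinearMap.ker (dotProductEquiv k n a)) = Nat.card k ^ (Fintype.card n - 1) := by
  have hne : dotProductEquiv k n a ≠ 0 := (dotProductEquiv k n).map_ne_zero_iff.2 ha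
  have hfinrank := Module.Dual.finrank_ker_add_one_of_ne_zero hne
  rw [Module.finrank_fintype_fun_eq_card] at hfinrank
  rw [Module.natCard_eq_pow_finrank (K := k), ← hfinrank, Nat.add_sub_cancel]

end DotProductKernel

section Spectrum

variable {n K : Type*} [Fintype n] [DecidableEq n] [Field K]

lemma mem_spectrum_iff_exists_mulVec_eq_smul {M : Matrix n n K} {z : K} :
    z ∈ spectrum K M ↔ ∃ v ≠ 0, M *ᵥ v = z • v := by
  rw [← Matrix.spectrum_toLin', ← Module.End.hasEigenvalue_iff_mem_spectrum]
  constructor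
  · intro h
    obtain ⟨v, hv⟩ := h.exists_hasEigenvector
    exact ⟨v, hv.2, hv.apply_eq_smul⟩
  · rintro ⟨v, hv0, hv⟩
    exact Module.End.hasEigenvalue_of_hasEigenvector
      (Module.End.hasEigenvector_iff.2 ⟨Module.End.mem_eigenspace_iff.2 hv, hv0⟩)

lemma mem_spectrum_of_vecMul_eq_smul {M : Matrix n n K} {z : K} {u : n → K} (hu : u ≠ 0)
    (h : u ᵥ* M = z • u) : z ∈ spectrum K M := by
  rw [Matrix.mem_spectrum_iff_isRoot_charpoly, ← Matrix.charpoly_transpose,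
    ← Matrix.mem_spectrum_iff_isRoot_charpoly, mem_spectrum_iff_exists_mulVec_eq_smul]
  exact ⟨u, hu, by rw [Matrix.mulVec_transpose, h]⟩

lemma exists_isPrimitiveRoot_mem_spectrum {A : Type*} [Ring A] [Algebra K A] [IsAlgClosed K]
    {p : ℕ} (hp : p.Prime) (hpK : (p : K) ≠ 0) {a : A} (ha : a ^ p = 1) (ha1 : a ≠ 1) :
    ∃ z ∈ spectrum K a, IsPrimitiveRoot z p := by
  let Q : Polynomial K := ∑ i ∈ Finset.range p, Polynomial.X ^ i
  have hQa : ¬ IsUnit (Polynomial.aeval a Q) := fun hu => by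
    have hmul : (a - 1) * Polynomial.aeval a Q = 0 := by
      simp [Q, mul_geom_sum, ha]
    exact sub_ne_zero.2 ha1 (hu.mul_left_eq_zero.1 hmul)
  have hQprod := (IsAlgClosed.splits Q).eq_prod_roots_of_monic
    (Polynomial.monic_geom_sum_X hp.ne_zero)
  obtain ⟨z, hz, hQz⟩ := spectrum.exists_mem_of_not_isUnit_aeval_prod (hQprod ▸ hQa)
  have hQz' : ∑ i ∈ Finset.range p, z ^ i = 0 := by
    simpa [Q, Polynomial.eval_finsetSum] using hQz
  have hz1 : z ≠ 1 := fun h => hpK (by simpa [h] using hQz')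
  have hzp : z ^ p = 1 := by
    rw [← sub_eq_zero, ← mul_geom_sum, hQz', mul_zero]
  have : Fact p.Prime := ⟨hp⟩
  exact ⟨z, hz, orderOf_eq_prime hzp hz1 ▸ IsPrimitiveRoot.orderOf z⟩

lemma pow_card_mem_spectrum {k : Type*} [Field k] [Fintype k] [Algebra k K] (M : Matrix n n k)
    {z : K} (hz : z ∈ spectrum K (M.map (algebraMap k K))) :
    z ^ Fintype.card k ∈ spectrum K (M.map (algebraMap k K)) := by
  simp only [Matrix.mem_spectrum_iff_isRoot_charpoly, Matrix.charpoly_map, Polynomial.IsRoot,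
    Polynomial.eval_map_algebraMap] at hz ⊢
  rw [← FiniteField.frobeniusAlgHom_apply k K, Polynomial.aeval_algHom_apply, hz, map_zero]

lemma pow_five_notMem_spectrum [Algebra F2 K] (hn : Fintype.card n < 6) (M : Matrix n n F2) {z : K}
    (hprim : IsPrimitiveRoot z 7) (hz : z ∈ spectrum K (M.map (algebraMap F2 K))) :
    z ^ 5 ∉ spectrum K (M.map (algebraMap F2 K)) := by
  classical
  intro hz5
  have sq_mem {y : K} (hy : y ∈ spectrum K (M.map (algebraMap F2 K))) :
      y ^ 2 ∈ spectrum K (M.map (algebraMap F2 K)) := pow_card_mem_spectrum M hy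
  have hz7 : z ^ 7 = 1 := hprim.pow_eq_one
  have hz4 := sq_mem (sq_mem hz)
  have hz3 := sq_mem hz5
  have hz6 := sq_mem hz3
  rw [show (z ^ 2) ^ 2 = z ^ 4 by ring] at hz4
  rw [show (z ^ 5) ^ 2 = z ^ 3 by linear_combination z ^ 3 * hz7] at hz3 hz6
  rw [← pow_mul] at hz6
  set χ := (M.map (algebraMap F2 K)).charpoly
  have hroots : primitiveRoots 7 K ⊆ χ.roots.toFinset := by
    intro y hy
    obtain ⟨i, hi, hcop, rfl⟩ :=
      hprim.isPrimitiveRoot_iff.1 (isPrimitiveRoot_of_mem_primitiveRoots hy)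
    rw [Multiset.mem_toFinset, Polynomial.mem_roots (Matrix.charpoly_monic _).ne_zero,
      ← Matrix.mem_spectrum_iff_isRoot_charpoly]
    interval_cases i
    · simp at hcop
    · simpa using hz
    · exact sq_mem hz
    all_goals assumption
  have six_le : 6 ≤ Fintype.card n := calc
    6 = (primitiveRoots 7 K).card := by rw [hprim.card_primitiveRoots]; decide
    _ ≤ χ.roots.toFinset.card := Finset.card_le_card hroots
    _ ≤ χ.roots.card := χ.roots.toFinset_card_le
    _ ≤ χ.natDegree := χ.card_roots'
    _ = Fintype.card n := Matrix.charpoly_natDegree_eq_dim _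
  omega

end Spectrum

section GroupActions

variable {T : Type*} [Group T]

lemma dvd_card_of_forall_dvd_index_stabilizer {Y : Type*} [MulAction T Y] [Finite Y] {d : ℕ}
    (h : ∀ y : Y, d ∣ (MulAction.stabilizer T y).index) : d ∣ Nat.card Y := by
  have : Fintype (Quotient (MulAction.orbitRel T Y)) := Fintype.ofFinite _
  have (ω : Quotient (MulAction.orbitRel T Y)) : Finite (T ⧸ MulAction.stabilizer T ω.out) :=
    .of_equiv _ (MulAction.orbitEquivQuotientStabilizer T ω.out)
  rw [Nat.card_congr (MulAction.selfEquivSigmaOrbitsQuotientStabilizer T Y), Nat.card_sigma]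
  exact Finset.dvd_sum fun ω _ => h ω.out

lemma pow_dvd_index_of_card_le {p k : ℕ} (hp : p.Prime) (hT : Nat.card T = p ^ (k + 1))
    {H : Subgroup T} (hH : Nat.card H ≤ p) : p ^ k ∣ H.index := by
  obtain ⟨j, -, hj⟩ := (Nat.dvd_prime_pow hp).1 (hT ▸ H.card_subgroup_dvd_card)
  have hj1 : j ≤ 1 := (Nat.pow_le_pow_iff_right hp.one_lt).1 (by rwa [← hj, pow_one])
  have hmul : p ^ j * H.index = p ^ j * p ^ (k + 1 - j) := by
    rw [← hj, H.card_mul_index, hT, hj, ← pow_add, Nat.add_sub_cancel' (by omega)]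
  rw [Nat.eq_of_mul_eq_mul_left (pow_pos hp.pos j) hmul]
  exact pow_dvd_pow p (by omega)

lemma pow_dvd_index_of_card_comap_conj_le {G : Type*} [Group G] {p k : ℕ} (hp : p.Prime)
    (hT : Nat.card T = p ^ (k + 1)) (τ : T →* G) (H : Subgroup G) [H.FiniteIndex]
    (hH : ∀ g : G, Nat.card (H.comap ((MulAut.conj g).toMonoidHom.comp τ)) ≤ p) :
    p ^ k ∣ H.index := by
  let _ : MulAction T (G ⧸ H) := MulAction.compHom _ τ
  refine dvd_card_of_forall_dvd_index_stabilizer (T := T) fun y => ?_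
  obtain ⟨g, rfl⟩ := QuotientGroup.mk_surjective y
  have hstab : MulAction.stabilizer T (g : G ⧸ H) =
      H.comap ((MulAut.conj g⁻¹).toMonoidHom.comp τ) := by
    ext t
    change ((τ t * g : G) : G ⧸ H) = g ↔ g⁻¹ * τ t * g⁻¹⁻¹ ∈ H
    rw [eq_comm, QuotientGroup.eq, inv_inv, mul_assoc]
  exact pow_dvd_index_of_card_le hp hT (hstab ▸ hH g⁻¹)

lemma card_le_two_of_eq_of_ne {α : Type*} (x₀ : α) (h : ∀ x y, x ≠ x₀ → y ≠ x₀ → x = y) :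
    Nat.card α ≤ 2 := by
  have hinj : Function.Injective fun x => x = x₀ := fun x y hxy => by
    by_cases hx : x = x₀
    · exact hx.trans (hxy.mp hx).symm
    · exact h x y hx fun hy => hx (hxy.mpr hy)
  simpa using Nat.card_le_card_of_injective _ hinj

end GroupActions

section SmoothCubic

variable {A : Type*} [CommRing A] [Algebra F2 A]

lemma gradientAt_act (g : Matrix (Fin 4) (Fin 4) F2) (f : MvPolynomial (Fin 4) F2)
    (v : Fin 4 → A) :
    gradientAt (act g f) v =
      gradientAt f (g.map (algebraMap F2 A) *ᵥ v) ᵥ* g.map (algebraMap F2 A) := by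
  rw [act, gradientAt_aeval]
  congr 1
  · congr 1
    funext i
    simp [Matrix.mulVec, dotProduct, Algebra.smul_def]
  · ext i j
    simp [gradientAt, pderiv_X, Pi.single_apply, Algebra.smul_def]

lemma act_one_add_vecMulVec (a w : Fin 4 → F2) (f : MvPolynomial (Fin 4) F2) :
    act (1 + Matrix.vecMulVec a w) f = aeval (X + linearForm w • (C ∘ a)) f := by
  rw [act]
  congr 2
  funext i
  have row_eq : ∑ j, (1 + Matrix.vecMulVec a w) i j • (X j : MvPolynomial (Fin 4) F2) =
      X i + a i • linearForm w := by
    simp [Matrix.one_apply, Matrix.vecMulVec_apply, add_smul, Finset.sum_add_distrib, linearForm,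
      Fintype.linearCombination_apply, Finset.smul_sum, smul_smul]
  rw [row_eq, smul_eq_C_mul, mul_comm]
  rfl

lemma card_GL_four : Nat.card (GL (Fin 4) F2) = 20160 := by
  rw [Matrix.card_GL_field]
  simp [Fin.prod_univ_succ, ZMod.card]

variable {f : MvPolynomial (Fin 4) F2}

namespace IsSmoothCubic

lemma eq_zero_of_gradientAt_eq_zero (hf : IsSmoothCubic f) {v : Fin 4 → Kbar}
    (hv : gradientAt f v = 0) : v = 0 := by
  have eval_map_eq (p : MvPolynomial (Fin 4) F2) :
      eval v (map (algebraMap F2 Kbar) p) = aeval v p := by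
    rw [eval_map, aeval_def]
  refine hf.2 v ?_ fun i => (eval_map_eq _).trans (congrFun hv i)
  have euler : (3 : ℕ) • aeval v f = 0 := by
    rw [← gradientAt_dotProduct_self hf.1, hv, zero_dotProduct]
  rw [eval_map_eq]
  linear_combination euler - aeval v f * (CharTwo.two_eq_zero : (2 : Kbar) = 0)

lemma eq_zero_of_rational_gradientAt_eq_zero (hf : IsSmoothCubic f) {a : Fin 4 → F2}
    (ha : gradientAt f a = 0) : a = 0 := by
  have hmap : algebraMap F2 Kbar ∘ a = 0 := by
    apply hf.eq_zero_of_gradientAt_eq_zero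
    rw [gradientAt_algebraMap, ha]
    funext i
    simp
  funext i
  exact (map_eq_zero (algebraMap F2 Kbar)).1 (congrFun hmap i)

lemma orderOf_ne_seven (hf : IsSmoothCubic f) {g : GL (Fin 4) F2} (hg : g ∈ stab f) :
    orderOf g ≠ 7 := by
  intro hord
  set M : Matrix (Fin 4) (Fin 4) Kbar := g.1.map (algebraMap F2 Kbar) with hM
  have hinj : Function.Injective ((algebraMap F2 Kbar).mapMatrix (m := Fin 4)) :=
    Matrix.map_injective (algebraMap F2 Kbar).injective
  have hM7 : M ^ 7 = 1 := by
    have hg7 : g.1 ^ 7 = 1 := by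
      rw [← Units.val_pow_eq_pow_val, ← hord, pow_orderOf_eq_one, Units.val_one]
    rw [hM, ← RingHom.mapMatrix_apply, ← map_pow, hg7, map_one]
  have hM1 : M ≠ 1 := by
    rw [hM, ← RingHom.mapMatrix_apply, (map_eq_one_iff _ hinj).ne]
    intro h
    simp [Units.val_eq_one.1 h] at hord
  have seven_ne_zero : ((7 : ℕ) : Kbar) ≠ 0 := by
    rw [Ne, CharP.cast_eq_zero_iff Kbar 2]
    norm_num
  obtain ⟨z, hz, hprim⟩ :=
    exists_isPrimitiveRoot_mem_spectrum (by norm_num) seven_ne_zero hM7 hM1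
  obtain ⟨v, hv0, hv⟩ := mem_spectrum_iff_exists_mulVec_eq_smul.1 hz
  have hgrad : gradientAt f v = z ^ 2 • (gradientAt f v ᵥ* M) := calc
    gradientAt f v = gradientAt (act g f) v := by rw [show act g f = f from hg]
    _ = gradientAt f (z • v) ᵥ* M := by rw [gradientAt_act, ← hM, hv]
    _ = z ^ 2 • (gradientAt f v ᵥ* M) := by
      rw [gradientAt_smul_of_isHomogeneous hf.1, Matrix.smul_vecMul]
  have hleft : gradientAt f v ᵥ* M = z ^ 5 • gradientAt f v := by
    conv_rhs => rw [hgrad, smul_smul, ← pow_add, hprim.pow_eq_one, one_smul]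
  exact pow_five_notMem_spectrum (by simp) g.1 hprim hz <|
    mem_spectrum_of_vecMul_eq_smul (mt hf.eq_zero_of_gradientAt_eq_zero hv0) hleft

lemma eq_of_act_transvection_eq (hf : IsSmoothCubic f) {a w₁ w₂ : Fin 4 → F2} (ha : a ≠ 0)
    (h₁ : w₁ ≠ 0) (h₂ : w₂ ≠ 0) (horth₁ : w₁ ⬝ᵥ a = 0) (horth₂ : w₂ ⬝ᵥ a = 0)
    (hinv₁ : act (1 + Matrix.vecMulVec a w₁) f = f)
    (hinv₂ : act (1 + Matrix.vecMulVec a w₂) f = f) : w₁ = w₂ := by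
  by_contra h₁₂
  rw [act_one_add_vecMulVec] at hinv₁ hinv₂
  have hgrad := gradientAt_eq_of_transvections hf.1 h₁ h₂ h₁₂ hinv₁ hinv₂
  have hval : aeval a f = 0 := by
    have euler : gradientAt f a ⬝ᵥ a = 3 • aeval a f := gradientAt_dotProduct_self hf.1 a
    rw [hgrad, smul_dotProduct, add_dotProduct, horth₁, horth₂, add_zero, smul_zero] at euler
    linear_combination -euler - aeval a f * (CharTwo.two_eq_zero : (2 : F2) = 0)
  exact ha (hf.eq_zero_of_rational_gradientAt_eq_zero (by rw [hgrad, hval, neg_zero, zero_smul]))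

lemma eq_of_conj_transvectionHom_mem_stab (hf : IsSmoothCubic f) {a : Fin 4 → F2} (ha : a ≠ 0)
    (g : GL (Fin 4) F2) {w₁ w₂ : Multiplicative (LinearMap.ker (dotProductEquiv F2 (Fin 4) a))}
    (h₁ : w₁ ≠ 1) (h₂ : w₂ ≠ 1) (hmem₁ : g * transvectionHom a w₁ * g⁻¹ ∈ stab f)
    (hmem₂ : g * transvectionHom a w₂ * g⁻¹ ∈ stab f) : w₁ = w₂ := by
  have hinj : Function.Injective fun w : Fin 4 → F2 => w ᵥ* g⁻¹.1 :=
    Matrix.vecMul_injective_of_isUnit g⁻¹.isUnit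
  have hcentre : g.1 *ᵥ a ≠ 0 := fun h =>
    ha (Matrix.mulVec_injective_of_isUnit g.isUnit (h.trans (Matrix.mulVec_zero _).symm))
  have hne {w : Multiplicative (LinearMap.ker (dotProductEquiv F2 (Fin 4) a))} (hw : w ≠ 1) :
      (w.toAdd : Fin 4 → F2) ᵥ* g⁻¹.1 ≠ 0 := fun h =>
    hw (Subtype.ext (hinj (h.trans (Matrix.zero_vecMul _).symm)))
  have horth (w : Multiplicative (LinearMap.ker (dotProductEquiv F2 (Fin 4) a))) :
      ((w.toAdd : Fin 4 → F2) ᵥ* g⁻¹.1) ⬝ᵥ (g.1 *ᵥ a) = 0 := by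
    rw [Matrix.dotProduct_mulVec, Matrix.vecMul_vecMul, Units.inv_mul, Matrix.vecMul_one,
      dotProduct_comm]
    exact w.toAdd.2
  have hact {w : Multiplicative (LinearMap.ker (dotProductEquiv F2 (Fin 4) a))}
      (hw : g * transvectionHom a w * g⁻¹ ∈ stab f) :
      act (1 + Matrix.vecMulVec (g.1 *ᵥ a) ((w.toAdd : Fin 4 → F2) ᵥ* g⁻¹.1)) f = f := by
    rw [← conj_transvectionHom]
    exact hw
  exact Subtype.ext <| hinj <| hf.eq_of_act_transvection_eq hcentre (hne h₁) (hne h₂) (horth w₁)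
    (horth w₂) (hact hmem₁) (hact hmem₂)

lemma seven_dvd_index_stab (hf : IsSmoothCubic f) : 7 ∣ (stab f).index := by
  have seven_prime : Fact (Nat.Prime 7) := ⟨by norm_num⟩
  have not_dvd : ¬ 7 ∣ Nat.card (stab f) := fun hdvd => by
    obtain ⟨g, hg⟩ := exists_prime_orderOf_dvd_card' 7 hdvd
    exact hf.orderOf_ne_seven g.2 ((Subgroup.orderOf_coe g).trans hg)
  have hdvd : 7 ∣ Nat.card (stab f) * (stab f).index := by
    rw [Subgroup.card_mul_index, card_GL_four]
    norm_num
  exact (seven_prime.out.dvd_mul.1 hdvd).resolve_left not_dvd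

lemma four_dvd_index_stab (hf : IsSmoothCubic f) : 4 ∣ (stab f).index := by
  let a : Fin 4 → F2 := Pi.single 0 1
  have ha : a ≠ 0 := by simp [a]
  have hT : Nat.card (Multiplicative (LinearMap.ker (dotProductEquiv F2 (Fin 4) a))) =
      2 ^ (2 + 1) := by
    rw [Nat.card_congr Multiplicative.toAdd, card_ker_dotProductEquiv ha]
    simp
  refine pow_dvd_index_of_card_comap_conj_le (k := 2) Nat.prime_two hT (transvectionHom a) (stab f)
    fun g => card_le_two_of_eq_of_ne 1 fun w₁ w₂ h₁ h₂ => Subtype.ext ?_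
  exact hf.eq_of_conj_transvectionHom_mem_stab ha g (OneMemClass.coe_eq_one.not.2 h₁)
    (OneMemClass.coe_eq_one.not.2 h₂) w₁.2 w₂.2

theorem card_stab_dvd_720 (hf : IsSmoothCubic f) : Nat.card (stab f) ∣ 720 := by
  obtain ⟨m, hm⟩ : 7 * 4 ∣ (stab f).index :=
    Nat.Coprime.mul_dvd_of_dvd_of_dvd (by norm_num) hf.seven_dvd_index_stab hf.four_dvd_index_stab
  have hcard := (stab f).card_mul_index
  rw [card_GL_four, hm] at hcard
  exact ⟨m, by linarith⟩

end IsSmoothCubic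

end SmoothCubic

/-- the stabilizer of a smooth cubic form over `𝔽₂` under the
linear-substitution action of `GL₄(𝔽₂)` has order at most `720`. -/
theorem stab_card_le_720 (f : MvPolynomial (Fin 4) F2) (hf : IsSmoothCubic f) :
    Nat.card (stab f) ≤ 720 :=
  Nat.le_of_dvd (by norm_num) hf.card_stab_dvd_720
end
end

section
/- Let Ω be the 4×4 antidiagonal matrix over 𝔽₂ with entries Ω₁₄ = Ω₂₃ = Ω₃₂ = Ω₄₁ = 1 and all other entries 0. Then every g ∈ GL₄(𝔽₂) satisfying gᵀΩg = Ω preserves the cubic form c₀ = x²t + y²z + yz² + xt², i.e., c₀ ∘ g = c₀. In other words, the symplectic group Sp₄(𝔽₂) defined by Ω is contained in the stabilizer of c₀ in GL₄(𝔽₂). -/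
open MvPolynomial

noncomputable section

open Matrix in
/-- The antidiagonal matrix `Ω` over `𝔽₂`. -/
def Omega : Matrix (Fin 4) (Fin 4) F2 :=
  !![0, 0, 0, 1; 0, 0, 1, 0; 0, 1, 0, 0; 1, 0, 0, 0]

/-!
Over a finite field `K` with `q` elements, the `q`-th power map of a commutative `K`-algebra is
`K`-linear, so that `(g x)^q = g x^q` for every matrix `g` over `K`, powers being taken
coordinatewise. Hence substituting `g x` for `x` turns the form `(x^q)ᵀ A x` into
`(x^q)ᵀ (gᵀ A g) x`, which is the original form as soon as `gᵀ A g = A`. The cubic `c₀` is the case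
`q = 2`, `A = Ω`.
-/

section FrobeniusForm

open Matrix

/-- The Frobenius form `∑ i, ∑ j, A i j * X i ^ q * X j` of a square matrix `A`, a twisted analogue
of the quadratic form of `A`. The exponent `q` is arbitrary in the definition; over a finite field
with `q` elements a linear change of variables acts on these forms by congruence of matrices. -/
def frobeniusForm {R n : Type*} [CommSemiring R] [Fintype n] (q : ℕ) (A : Matrix n n R) :
    MvPolynomial n R :=
  X ^ q ⬝ᵥ A.map C *ᵥ X

lemma aeval_frobeniusForm {R S n : Type*} [CommSemiring R] [CommSemiring S] [Algebra R S]
    [Fintype n] (u : n → S) (q : ℕ) (A : Matrix n n R) :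
    aeval u (frobeniusForm q A) = u ^ q ⬝ᵥ A.map (algebraMap R S) *ᵥ u := by
  simp [frobeniusForm, dotProduct, mulVec]

lemma toMvPolynomial_eq_map_mulVec {R m n : Type*} [CommSemiring R] [Fintype n]
    (g : Matrix m n R) :
    g.toMvPolynomial = g.map (algebraMap R (MvPolynomial n R)) *ᵥ X := by
  ext1 i
  simp [toMvPolynomial, mulVec, dotProduct, C_mul_X_eq_monomial]

section FiniteField

variable {K m n : Type*} [Field K] [Fintype K] [Fintype n]

lemma map_mulVec_pow_card {S : Type*} [CommRing S] [Algebra K S] (g : Matrix m n K) (u : n → S) :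
    (g.map (algebraMap K S) *ᵥ u) ^ Fintype.card K =
      g.map (algebraMap K S) *ᵥ u ^ Fintype.card K := by
  ext1 i
  simp only [mulVec, dotProduct, Pi.pow_apply, Matrix.map_apply, ← Algebra.smul_def,
    ← FiniteField.frobeniusAlgHom_apply, map_sum, map_smul]

variable [Fintype m]

lemma bind₁_toMvPolynomial_frobeniusForm (g : Matrix m n K) (A : Matrix m m K) :
    bind₁ g.toMvPolynomial (frobeniusForm (Fintype.card K) A) =
      frobeniusForm (Fintype.card K) (gᵀ * A * g) := by
  set c := algebraMap K (MvPolynomial n K)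
  calc bind₁ g.toMvPolynomial (frobeniusForm (Fintype.card K) A)
      = (g.map c *ᵥ X) ^ Fintype.card K ⬝ᵥ A.map c *ᵥ g.map c *ᵥ X := by
        rw [bind₁, aeval_frobeniusForm, toMvPolynomial_eq_map_mulVec]
    _ = (g.map c *ᵥ X ^ Fintype.card K) ⬝ᵥ A.map c *ᵥ g.map c *ᵥ X := by
        rw [map_mulVec_pow_card]
    _ = X ^ Fintype.card K ⬝ᵥ ((g.map c)ᵀ * A.map c * g.map c) *ᵥ X := by
        rw [← mulVec_mulVec, ← mulVec_mulVec, dotProduct_mulVec _ (g.map c)ᵀ, vecMul_transpose]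
    _ = frobeniusForm (Fintype.card K) (gᵀ * A * g) := by
        rw [← transpose_map, ← Matrix.map_mul, ← Matrix.map_mul, frobeniusForm, ← algebraMap_eq]

theorem symplectic_preserves_c0_general {g A : Matrix n n K} (hg : gᵀ * A * g = A) :
    bind₁ g.toMvPolynomial (frobeniusForm (Fintype.card K) A) =
      frobeniusForm (Fintype.card K) A := by
  rw [bind₁_toMvPolynomial_frobeniusForm, hg]

end FiniteField

lemma act_eq_bind₁_toMvPolynomial (g : Matrix (Fin 4) (Fin 4) F2) (f : MvPolynomial (Fin 4) F2) :
    act g f = bind₁ g.toMvPolynomial f := by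
  simp only [act, bind₁, toMvPolynomial_eq_map_mulVec, Algebra.smul_def]
  rfl

lemma c0_eq_frobeniusForm_Omega : c0 = frobeniusForm 2 Omega := by
  simp only [frobeniusForm, c0, Omega, dotProduct, mulVec, Fin.sum_univ_four, Pi.pow_apply,
    Matrix.map_apply, of_apply, cons_val, map_zero, map_one]
  ring

end FrobeniusForm

open Matrix in
/-- every `g ∈ GL₄(𝔽₂)` with `gᵀ Ω g = Ω` (i.e. every element of the symplectic
group `Sp₄(𝔽₂)` defined by `Ω`) preserves the cubic form `c₀`. -/
theorem symplectic_preserves_c0 :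
    ∀ g : GL (Fin 4) F2,
      (g : Matrix (Fin 4) (Fin 4) F2)ᵀ * Omega * (g : Matrix (Fin 4) (Fin 4) F2) = Omega →
      act (g : Matrix (Fin 4) (Fin 4) F2) c0 = c0 := by
  intro g hg
  rw [act_eq_bind₁_toMvPolynomial, c0_eq_frobeniusForm_Omega]
  exact symplectic_preserves_c0_general hg
end
end

section
/- A homogeneous cubic form f in the variables x, y, z, t over 𝔽₂ vanishes at every point of 𝔽₂⁴ if and only if f is an 𝔽₂-linear combination of the six cubic forms xy(x+y), xz(x+z), xt(x+t), yz(y+z), yt(y+t), zt(z+t). In particular there are exactly 63 nonzero cubic forms over 𝔽₂ vanishing at every point of 𝔽₂⁴. -/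
open MvPolynomial

noncomputable section

/-!
Over a field with `q` elements, the combinatorial Nullstellensatz writes a form `f` of degree
`q + 1` vanishing at every point as `∑ hᵢ (Xᵢ ^ q - Xᵢ)` with `deg hᵢ ≤ 1`. Comparing homogeneous
components, only the linear parts `lᵢ` of the `hᵢ` contribute: `f = ∑ lᵢ Xᵢ ^ q` and
`∑ lᵢ Xᵢ = 0`. The second relation says that the coefficient matrix of the `lᵢ` is alternating, so
`f` is a combination of the Moore determinants `Xᵢ Xⱼ ^ q - Xᵢ ^ q Xⱼ` with `i < j`. These are
linearly independent because `Xᵢ Xⱼ ^ q` occurs in only one of them; for `q = 2` they are the forms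
`Xᵢ Xⱼ (Xᵢ + Xⱼ)`.
-/

lemma sum_sum_eq_sum_filter_lt {ι M : Type*} [Fintype ι] [LinearOrder ι] [AddCommMonoid M]
    {F : ι → ι → M} (hF : ∀ i, F i i = 0) :
    ∑ i, ∑ j, F i j = ∑ p : ι × ι with p.1 < p.2, (F p.1 p.2 + F p.2 p.1) := by
  have hswap : ∑ p : ι × ι with p.1 < p.2, F p.2 p.1 = ∑ p : ι × ι with ¬p.1 < p.2, F p.1 p.2 :=
    calc ∑ p : ι × ι with p.1 < p.2, F p.2 p.1
      _ = ∑ p : ι × ι with p.2 < p.1, F p.1 p.2 :=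
        Finset.sum_equiv (Equiv.prodComm ι ι) (by simp) (by simp)
      _ = ∑ p : ι × ι with ¬p.1 < p.2, F p.1 p.2 := by
        refine Finset.sum_subset (fun p ↦ by simpa using le_of_lt) fun p hp hp' ↦ ?_
        simp only [Finset.mem_filter_univ, not_lt] at hp hp'
        rw [le_antisymm hp hp', hF]
  rw [Finset.sum_add_distrib, hswap, Finset.sum_filter_add_sum_filter_not, Fintype.sum_prod_type]

section LinearForms

variable {σ R : Type*} [CommSemiring R] [Fintype σ]

lemma eq_sum_coeff_smul_X_of_isHomogeneous_one {l : MvPolynomial σ R} (hl : l.IsHomogeneous 1) :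
    l = ∑ i, coeff (Finsupp.single i 1) l • X i := by
  classical
  rw [← mem_homogeneousSubmodule, homogeneousSubmodule_one_eq_span_X,
    Submodule.mem_span_range_iff_exists_fun] at hl
  obtain ⟨c, rfl⟩ := hl
  simp [coeff_sum, coeff_X, Finsupp.single_left_inj]

variable {l : σ → MvPolynomial σ R}

lemma coeff_single_eq_zero_of_sum_mul_X_eq_zero (h : ∑ k, l k * X k = 0) (i : σ) :
    coeff (Finsupp.single i 1) (l i) = 0 := by
  classical
  have key := congrArg (coeff (Finsupp.single i 1 + Finsupp.single i 1)) h
  rw [coeff_sum, Finset.sum_eq_single i (fun k _ hk ↦ ?_) (by simp), coeff_mul_X] at key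
  · exact key
  · simp [coeff_mul_X', ← Finsupp.single_add, hk]

lemma coeff_single_add_coeff_single_eq_zero_of_sum_mul_X_eq_zero (h : ∑ k, l k * X k = 0)
    {i j : σ} (hij : i ≠ j) :
    coeff (Finsupp.single j 1) (l i) + coeff (Finsupp.single i 1) (l j) = 0 := by
  classical
  have key := congrArg (coeff (Finsupp.single i 1 + Finsupp.single j 1)) h
  have hother : ∀ k, k ≠ i ∧ k ≠ j →
      coeff (Finsupp.single i 1 + Finsupp.single j 1) (l k * X k) = 0 := fun k hk ↦ by
    simp [coeff_mul_X', hk.1.symm, hk.2.symm]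
  rwa [coeff_sum, Fintype.sum_eq_add i j hij hother, coeff_mul_X, add_comm (Finsupp.single i 1),
    coeff_mul_X] at key

end LinearForms

lemma eq_C_add_homogeneousComponent_one_of_totalDegree_le_one {σ R : Type*} [CommSemiring R]
    {φ : MvPolynomial σ R} (hφ : φ.totalDegree ≤ 1) :
    φ = C (coeff 0 φ) + homogeneousComponent 1 φ := by
  calc φ = ∑ d ∈ Finset.range 2, homogeneousComponent d φ := by
        conv_lhs => rw [← sum_homogeneousComponent φ]
        refine Finset.sum_subset (Finset.range_mono (by lia)) fun d _ hd ↦ ?_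
        exact homogeneousComponent_eq_zero _ _ (by simpa using hd)
    _ = C (coeff 0 φ) + homogeneousComponent 1 φ := by
        rw [Finset.sum_range_succ, Finset.sum_range_one, homogeneousComponent_zero]

lemma exists_isHomogeneous_one_of_eq_sum_mul_X_pow_sub_X {σ R : Type*} [CommRing R] [Fintype σ]
    {q : ℕ} (hq : 1 < q) {f : MvPolynomial σ R} {h : σ → MvPolynomial σ R}
    (hf : f.IsHomogeneous (q + 1)) (hdeg : ∀ i, (h i).totalDegree ≤ 1)
    (hsum : f = ∑ i, h i * (X i ^ q - X i)) :
    ∃ l : σ → MvPolynomial σ R, (∀ i, (l i).IsHomogeneous 1) ∧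
      ∑ i, l i * X i = 0 ∧ f = ∑ i, l i * X i ^ q := by
  let c (i : σ) : R := coeff 0 (h i)
  let l (i : σ) : MvPolynomial σ R := homogeneousComponent 1 (h i)
  have hl (i : σ) : (l i).IsHomogeneous 1 := homogeneousComponent_isHomogeneous 1 (h i)
  have hlq : (∑ i, l i * X i ^ q).IsHomogeneous (q + 1) := .sum _ _ _ fun i _ ↦ by
    simpa [add_comm] using (hl i).mul (isHomogeneous_X_pow i q)
  have hcq : (∑ i, C (c i) * X i ^ q).IsHomogeneous q :=
    .sum _ _ _ fun i _ ↦ isHomogeneous_C_mul_X_pow (c i) i q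
  have hl1 : (∑ i, l i * X i).IsHomogeneous 2 :=
    .sum _ _ _ fun i _ ↦ (hl i).mul (isHomogeneous_X R i)
  have hc1 : (∑ i, C (c i) * X i).IsHomogeneous 1 :=
    .sum _ _ _ fun i _ ↦ isHomogeneous_C_mul_X (c i) i
  have hsplit : f = ∑ i, l i * X i ^ q + ∑ i, C (c i) * X i ^ q - ∑ i, l i * X i
      - ∑ i, C (c i) * X i := by
    rw [hsum, ← Finset.sum_add_distrib, ← Finset.sum_sub_distrib, ← Finset.sum_sub_distrib]
    refine Finset.sum_congr rfl fun i _ ↦ ?_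
    rw [eq_C_add_homogeneousComponent_one_of_totalDegree_le_one (hdeg i)]
    ring
  have hc1_zero : ∑ i, C (c i) * X i = (0 : MvPolynomial σ R) := by
    simpa [homogeneousComponent_of_mem hf, homogeneousComponent_of_mem hlq,
      homogeneousComponent_of_mem hcq, homogeneousComponent_of_mem hl1,
      homogeneousComponent_of_mem hc1, hq.ne, (zero_lt_one.trans hq).ne'] using
      congrArg (homogeneousComponent 1) hsplit
  -- Substituting `X i ^ q` for `X i` turns the vanishing linear part into the degree `q` part.
  have hcq_zero : ∑ i, C (c i) * X i ^ q = (0 : MvPolynomial σ R) := by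
    simpa using congrArg (expand q) hc1_zero
  have hl1_zero : ∑ i, l i * X i = 0 := by
    rw [hcq_zero, hc1_zero, add_zero, sub_zero] at hsplit
    simpa [homogeneousComponent_of_mem hf, homogeneousComponent_of_mem hlq,
      homogeneousComponent_of_mem hl1, hq.ne'] using congrArg (homogeneousComponent 2) hsplit
  exact ⟨l, hl, hl1_zero, by simpa [hcq_zero, hc1_zero, hl1_zero] using hsplit⟩

section MooreDeterminant

variable {σ R : Type*} [CommRing R]

variable (R) in
/-- The Moore determinant of the variables `X i` and `X j`: the `2 × 2` determinant with rows
`(X i, X j)` and `(X i ^ q, X j ^ q)`. The exponent `q` is arbitrary; over a field with `q` elements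
it is, up to sign, the product of the linear forms defining the points of the projective line. -/
def mooreDet (q : ℕ) (i j : σ) : MvPolynomial σ R :=
  X i * X j ^ q - X i ^ q * X j

lemma isHomogeneous_mooreDet (q : ℕ) (i j : σ) : (mooreDet R q i j).IsHomogeneous (q + 1) := by
  refine IsHomogeneous.sub ?_ ?_
  · simpa [add_comm] using (isHomogeneous_X R i).mul (isHomogeneous_X_pow j q)
  · exact (isHomogeneous_X_pow i q).mul (isHomogeneous_X R j)

variable [LinearOrder σ]

lemma coeff_mooreDet {q : ℕ} (hq : 1 < q) {i j k l : σ} (hij : i < j) (hkl : k < l) :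
    coeff (Finsupp.single i 1 + Finsupp.single j q) (mooreDet R q k l) =
      if k = i ∧ l = j then 1 else 0 := by
  have hfst : Finsupp.single k 1 + Finsupp.single l q =
      Finsupp.single i 1 + Finsupp.single j q ↔ k = i ∧ l = j := by
    rw [Finsupp.single_add_single_eq_single_add_single one_ne_zero (by lia)]
    grind
  have hsnd : Finsupp.single k q + Finsupp.single l 1 ≠
      Finsupp.single i 1 + Finsupp.single j q := by
    rw [add_comm, Ne, Finsupp.single_add_single_eq_single_add_single one_ne_zero (by lia)]
    grind
  simp only [mooreDet, X, monomial_pow, monomial_mul, coeff_sub, coeff_monomial]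
  simp [hfst, hsnd]

lemma linearIndepOn_mooreDet {q : ℕ} (hq : 1 < q) :
    LinearIndepOn R (fun p : σ × σ ↦ mooreDet R q p.1 p.2) {p | p.1 < p.2} := by
  refine linearIndependent_iff'.2 fun s c hc p hp ↦ ?_
  have key := congrArg (coeff (Finsupp.single p.1.1 1 + Finsupp.single p.1.2 q)) hc
  rw [coeff_sum, Finset.sum_eq_single_of_mem p hp fun r _ hr ↦ ?_] at key
  · simpa [coeff_mooreDet hq p.2 p.2] using key
  · have : ¬ (r.1.1 = p.1.1 ∧ r.1.2 = p.1.2) := fun h ↦ hr (Subtype.ext (Prod.ext h.1 h.2))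
    simp [coeff_mooreDet hq p.2 r.2, this]

lemma sum_mul_X_pow_mem_span_mooreDet [Fintype σ] {l : σ → MvPolynomial σ R}
    (hl : ∀ i, (l i).IsHomogeneous 1) (h : ∑ i, l i * X i = 0) (q : ℕ) :
    ∑ i, l i * X i ^ q ∈
      Submodule.span R ((fun p : σ × σ ↦ mooreDet R q p.1 p.2) '' {p | p.1 < p.2}) := by
  let a (i j : σ) : R := coeff (Finsupp.single j 1) (l i)
  have hdiag (i : σ) : a i i • (X i * X i ^ q : MvPolynomial σ R) = 0 := by
    simp [a, coeff_single_eq_zero_of_sum_mul_X_eq_zero h]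
  have hpair {i j : σ} (hij : i < j) :
      a i j • (X j * X i ^ q) + a j i • (X i * X j ^ q) = a j i • mooreDet R q i j := by
    have ha : a i j = -a j i := eq_neg_of_add_eq_zero_left
      (coeff_single_add_coeff_single_eq_zero_of_sum_mul_X_eq_zero h hij.ne)
    rw [ha, mooreDet, mul_comm (X j)]
    module
  have hsum : ∑ i, l i * X i ^ q = ∑ i, ∑ j, a i j • (X j * X i ^ q) := by
    refine Finset.sum_congr rfl fun i _ ↦ ?_
    conv_lhs => rw [eq_sum_coeff_smul_X_of_isHomogeneous_one (hl i), Finset.sum_mul]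
    simp only [a, smul_mul_assoc]
  rw [hsum, sum_sum_eq_sum_filter_lt hdiag]
  refine Submodule.sum_mem _ fun p hp ↦ ?_
  have hlt : p.1 < p.2 := (Finset.mem_filter_univ p).1 hp
  rw [hpair hlt]
  exact Submodule.smul_mem _ _ (Submodule.subset_span ⟨p, hlt, rfl⟩)

end MooreDeterminant

section VanishingForms

variable {σ R : Type*} [CommSemiring R]

variable (σ R) in
/-- The module of forms of degree `d` over `R` that vanish at every point of `σ → R`. -/
def vanishingForms (d : ℕ) : Submodule R (MvPolynomial σ R) :=
  homogeneousSubmodule σ R d ⊓ LinearMap.ker (evalₗ R σ)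

lemma mem_vanishingForms {d : ℕ} {f : MvPolynomial σ R} :
    f ∈ vanishingForms σ R d ↔ f.IsHomogeneous d ∧ ∀ v, eval v f = 0 := by
  simp [vanishingForms, funext_iff]

end VanishingForms

section FiniteField

variable {σ K : Type*} [Field K] [Fintype K]

lemma prod_X_sub_C_eq_X_pow_card_sub_X (i : σ) :
    ∏ s : K, (X i - C s) = (X i ^ Fintype.card K - X i : MvPolynomial σ K) := by
  let P : Polynomial K := Polynomial.X ^ Fintype.card K - Polynomial.X
  have hroots : P.roots = Finset.univ.val := FiniteField.roots_X_pow_card_sub_X K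
  have hmonic : P.Monic := Polynomial.monic_X_pow_sub (by simpa using Fintype.one_lt_card)
  have hcard : P.roots.card = P.natDegree := by
    rw [FiniteField.X_pow_card_sub_X_natDegree_eq K Fintype.one_lt_card, hroots]
    rfl
  have hP := Polynomial.prod_multiset_X_sub_C_of_monic_of_roots_card_eq hmonic hcard
  rw [hroots] at hP
  simpa [P, algebraMap_eq] using congrArg (Polynomial.aeval (X i : MvPolynomial σ K)) hP

lemma card_le_totalDegree_X_pow_card_sub_X (i : σ) :
    Fintype.card K ≤ (X i ^ Fintype.card K - X i : MvPolynomial σ K).totalDegree := by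
  classical
  have hsupp : Finsupp.single i (Fintype.card K) ∈
      (X i ^ Fintype.card K - X i : MvPolynomial σ K).support := by
    simp [coeff_X_pow, coeff_X, Finsupp.single_eq_single_iff, Fintype.one_lt_card.ne]
  simpa using le_totalDegree hsupp

lemma eval_mooreDet_card (i j : σ) (v : σ → K) : eval v (mooreDet K (Fintype.card K) i j) = 0 := by
  simp [mooreDet, FiniteField.pow_card]

section Representation

variable [Fintype σ] {f : MvPolynomial σ K}

lemma exists_eq_sum_mul_X_pow_card_sub_X (hf : ∀ v, eval v f = 0) :
    ∃ h : σ → MvPolynomial σ K, (∀ i, (h i).totalDegree ≤ f.totalDegree - Fintype.card K) ∧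
      f = ∑ i, h i * (X i ^ Fintype.card K - X i) := by
  obtain ⟨h, hdeg, hsum⟩ := combinatorial_nullstellensatz_exists_linearCombination
    (fun _ ↦ Finset.univ) (fun _ ↦ Finset.univ_nonempty) f fun v _ ↦ hf v
  simp only [prod_X_sub_C_eq_X_pow_card_sub_X] at hdeg hsum
  refine ⟨h, fun i ↦ ?_, ?_⟩
  · rcases eq_or_ne (h i) 0 with h0 | h0
    · simp [h0]
    · have hX := card_le_totalDegree_X_pow_card_sub_X (K := K) i
      have hX0 : (X i ^ Fintype.card K - X i : MvPolynomial σ K) ≠ 0 := by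
        intro H
        simp [H] at hX
      have := hdeg i
      rw [totalDegree_mul_of_isDomain hX0 h0] at this
      lia
  · simpa [Finsupp.linearCombination_apply, Finsupp.sum_fintype] using hsum

lemma exists_isHomogeneous_one_eq_sum_mul_X_pow_card
    (hf : f ∈ vanishingForms σ K (Fintype.card K + 1)) :
    ∃ l : σ → MvPolynomial σ K, (∀ i, (l i).IsHomogeneous 1) ∧
      ∑ i, l i * X i = 0 ∧ f = ∑ i, l i * X i ^ Fintype.card K := by
  obtain ⟨hhom, hvan⟩ := mem_vanishingForms.1 hf
  obtain ⟨h, hdeg, hsum⟩ := exists_eq_sum_mul_X_pow_card_sub_X hvan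
  have hdeg_one (i : σ) : (h i).totalDegree ≤ 1 :=
    (hdeg i).trans (Nat.sub_le_iff_le_add'.2 hhom.totalDegree_le)
  exact exists_isHomogeneous_one_of_eq_sum_mul_X_pow_sub_X Fintype.one_lt_card hhom hdeg_one hsum

end Representation

variable [LinearOrder σ]

variable (σ K) in
theorem vanishingForms_card_add_one_eq_span_mooreDet [Finite σ] :
    vanishingForms σ K (Fintype.card K + 1) = Submodule.span K
      ((fun p : σ × σ ↦ mooreDet K (Fintype.card K) p.1 p.2) '' {p | p.1 < p.2}) := by
  have := Fintype.ofFinite σ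
  refine le_antisymm (fun f hf ↦ ?_) (Submodule.span_le.2 ?_)
  · obtain ⟨l, hl, hrel, rfl⟩ := exists_isHomogeneous_one_eq_sum_mul_X_pow_card hf
    exact sum_mul_X_pow_mem_span_mooreDet hl hrel _
  · rintro _ ⟨p, -, rfl⟩
    exact mem_vanishingForms.2 ⟨isHomogeneous_mooreDet _ _ _, eval_mooreDet_card _ _⟩

variable [Fintype σ]

lemma mem_vanishingForms_card_add_one_iff_exists_eq_sum_mooreDet {f : MvPolynomial σ K} :
    f ∈ vanishingForms σ K (Fintype.card K + 1) ↔
      ∃ a : σ × σ → K, f = ∑ p with p.1 < p.2, a p • mooreDet K (Fintype.card K) p.1 p.2 := by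
  have hset : {p : σ × σ | p.1 < p.2} = (Finset.univ.filter fun p : σ × σ ↦ p.1 < p.2) := by simp
  rw [vanishingForms_card_add_one_eq_span_mooreDet, hset,
    Submodule.mem_span_image_finset_iff_exists_fun']
  simp only [eq_comm]

variable (σ K) in
lemma finrank_vanishingForms_card_add_one :
    Module.finrank K (vanishingForms σ K (Fintype.card K + 1)) = (Fintype.card σ).choose 2 := by
  rw [vanishingForms_card_add_one_eq_span_mooreDet, Set.image_eq_range,
    finrank_span_eq_card (linearIndepOn_mooreDet Fintype.one_lt_card),
    ← Fintype.card_product_filter_lt, ← Fintype.card_subtype]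
  rfl

variable (σ K) in
lemma ncard_vanishingForms_card_add_one :
    (vanishingForms σ K (Fintype.card K + 1) : Set (MvPolynomial σ K)).ncard =
      Fintype.card K ^ (Fintype.card σ).choose 2 := by
  have : Module.Finite K (vanishingForms σ K (Fintype.card K + 1)) := by
    rw [vanishingForms_card_add_one_eq_span_mooreDet]
    exact Module.Finite.span_of_finite K (Set.toFinite _)
  rw [← Nat.card_coe_set_eq, SetLike.coe_sort_coe, Module.natCard_eq_pow_finrank (K := K),
    finrank_vanishingForms_card_add_one, Nat.card_eq_fintype_card]

end FiniteField

theorem vanishing_cubic_forms_general (σ K : Type*) [Fintype σ] [LinearOrder σ] [Field K]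
    [Fintype K] :
    (∀ f : MvPolynomial σ K, f.IsHomogeneous (Fintype.card K + 1) →
      ((∀ v : σ → K, eval v f = 0) ↔
        ∃ a : σ × σ → K, f = ∑ p with p.1 < p.2, a p • mooreDet K (Fintype.card K) p.1 p.2)) ∧
    {f : MvPolynomial σ K | f.IsHomogeneous (Fintype.card K + 1) ∧ f ≠ 0 ∧
      ∀ v : σ → K, eval v f = 0}.ncard =
        Fintype.card K ^ (Fintype.card σ).choose 2 - 1 := by
  constructor
  · intro f hf
    rw [← mem_vanishingForms_card_add_one_iff_exists_eq_sum_mooreDet, mem_vanishingForms,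
      and_iff_right hf]
  · have hset : {f : MvPolynomial σ K | f.IsHomogeneous (Fintype.card K + 1) ∧ f ≠ 0 ∧
        ∀ v : σ → K, eval v f = 0} = (vanishingForms σ K (Fintype.card K + 1) : Set _) \ {0} := by
      ext f
      simp [mem_vanishingForms, and_assoc, and_comm (a := f ≠ 0)]
    rw [hset, Set.ncard_sdiff_singleton_of_mem (zero_mem _), ncard_vanishingForms_card_add_one]

lemma mooreDet_two (R : Type*) [CommRing R] [CharP R 2] {σ : Type*} (i j : σ) :
    mooreDet R 2 i j = X i * X j * (X i + X j) := by
  rw [mooreDet, CharTwo.sub_eq_add]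
  ring

lemma exists_sum_filter_lt_fin_four_iff {R M : Type*} [Semiring R] [AddCommMonoid M] [Module R M]
    (m : Fin 4 × Fin 4 → M) (x : M) :
    (∃ a : Fin 4 × Fin 4 → R, x = ∑ p with p.1 < p.2, a p • m p) ↔
      ∃ a₁ a₂ a₃ a₄ a₅ a₆ : R, x = a₁ • m (0, 1) + a₂ • m (0, 2) + a₃ • m (0, 3) + a₄ • m (1, 2) +
        a₅ • m (1, 3) + a₆ • m (2, 3) := by
  have hsum (a : Fin 4 × Fin 4 → R) : ∑ p with p.1 < p.2, a p • m p =
      a (0, 1) • m (0, 1) + a (0, 2) • m (0, 2) + a (0, 3) • m (0, 3) + a (1, 2) • m (1, 2) +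
        a (1, 3) • m (1, 3) + a (2, 3) • m (2, 3) := by
    simp [Finset.sum_filter, Fintype.sum_prod_type, Fin.sum_univ_four, add_assoc]
  simp only [hsum]
  constructor
  · rintro ⟨a, ha⟩
    exact ⟨_, _, _, _, _, _, ha⟩
  · rintro ⟨a₁, a₂, a₃, a₄, a₅, a₆, h⟩
    exact ⟨fun p ↦ !![0, a₁, a₂, a₃; 0, 0, a₄, a₅; 0, 0, 0, a₆; 0, 0, 0, 0] p.1 p.2, by simpa⟩

/-- a homogeneous cubic form over `𝔽₂` vanishes at every point of `𝔽₂⁴` if and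
only if it is an `𝔽₂`-linear combination of the six forms `xᵢxⱼ(xᵢ+xⱼ)`, `i < j`; in
particular there are exactly `63` nonzero cubic forms vanishing everywhere on `𝔽₂⁴`. -/
theorem vanishing_cubic_forms :
    (∀ f : MvPolynomial (Fin 4) F2, f.IsHomogeneous 3 →
      ((∀ v : Fin 4 → F2, eval v f = 0) ↔
        ∃ a₁ a₂ a₃ a₄ a₅ a₆ : F2,
          f = a₁ • (X 0 * X 1 * (X 0 + X 1)) + a₂ • (X 0 * X 2 * (X 0 + X 2))
            + a₃ • (X 0 * X 3 * (X 0 + X 3)) + a₄ • (X 1 * X 2 * (X 1 + X 2))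
            + a₅ • (X 1 * X 3 * (X 1 + X 3)) + a₆ • (X 2 * X 3 * (X 2 + X 3)))) ∧
    {f : MvPolynomial (Fin 4) F2 |
      f.IsHomogeneous 3 ∧ f ≠ 0 ∧ ∀ v : Fin 4 → F2, eval v f = 0}.ncard = 63 := by
  have h := vanishing_cubic_forms_general (Fin 4) F2
  simpa only [ZMod.card, mooreDet_two, exists_sum_filter_lt_fin_four_iff, Fintype.card_fin,
    Nat.reduceAdd, Nat.choose, Nat.reducePow, Nat.reduceSub] using h
end
end
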